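/- arXiv:2301.10037 — 7 statements merged into one kernel-verified Lean document; each statement's English description precedes it below -/
import Mathlib

section
/- Soundness of Hyper Hoare Logic: for all hyper-assertions P, Q and every command C, if ⊢ {P} C {Q} is derivable in the core proof system, then the hyper-triple ⊨ {P} C {Q} is valid. -/
/-- Commands of the programming language. -/
inductive Cmd (PVar PVal : Type) : Type where
  | skip : Cmd PVar PVal
  | assign : PVar → ((PVar → PVal) → PVal) → Cmd PVar PVal
  | havoc : PVar → Cmd PVar PVal
  | assume : ((PVar → PVal) → Prop) → Cmd PVar PVal
  | seq : Cmd PVar PVal → Cmd PVar PVal → Cmd PVar PVal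
  | choice : Cmd PVar PVal → Cmd PVar PVal → Cmd PVar PVal
  | iter : Cmd PVar PVal → Cmd PVar PVal

/-- Big-step semantics ⟨C, σ⟩ → σ'. -/
inductive BigStep {PVar PVal : Type} [DecidableEq PVar] :
    Cmd PVar PVal → (PVar → PVal) → (PVar → PVal) → Prop where
  | skip (σ : PVar → PVal) : BigStep Cmd.skip σ σ
  | assign (x : PVar) (e : (PVar → PVal) → PVal) (σ : PVar → PVal) :
      BigStep (Cmd.assign x e) σ (Function.update σ x (e σ))
  | havoc (x : PVar) (σ : PVar → PVal) (v : PVal) :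
      BigStep (Cmd.havoc x) σ (Function.update σ x v)
  | assume {b : (PVar → PVal) → Prop} {σ : PVar → PVal} (h : b σ) :
      BigStep (Cmd.assume b) σ σ
  | seq {C1 C2 : Cmd PVar PVal} {σ σ' σ'' : PVar → PVal} :
      BigStep C1 σ σ' → BigStep C2 σ' σ'' → BigStep (Cmd.seq C1 C2) σ σ''
  | choiceL {C1 C2 : Cmd PVar PVal} {σ σ' : PVar → PVal} :
      BigStep C1 σ σ' → BigStep (Cmd.choice C1 C2) σ σ'
  | choiceR {C1 C2 : Cmd PVar PVal} {σ σ' : PVar → PVal} :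
      BigStep C2 σ σ' → BigStep (Cmd.choice C1 C2) σ σ'
  | iterNil {C : Cmd PVar PVal} {σ : PVar → PVal} : BigStep (Cmd.iter C) σ σ
  | iterCons {C : Cmd PVar PVal} {σ σ' σ'' : PVar → PVal} :
      BigStep C σ σ' → BigStep (Cmd.iter C) σ' σ'' → BigStep (Cmd.iter C) σ σ''

/-- Extended states: a logical state paired with a program state. -/
abbrev EState (PVar PVal LVar LVal : Type) : Type :=
  (LVar → LVal) × (PVar → PVal)

/-- Extended semantics of a command on a set of extended states. -/
def sem {PVar PVal LVar LVal : Type} [DecidableEq PVar] (C : Cmd PVar PVal)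
    (S : Set (EState PVar PVal LVar LVal)) : Set (EState PVar PVal LVar LVal) :=
  { φ | ∃ σ : PVar → PVal, (φ.1, σ) ∈ S ∧ BigStep C σ φ.2 }

/-- Hyper-assertions: predicates over sets of extended states. -/
abbrev HAssn (PVar PVal LVar LVal : Type) : Type :=
  Set (EState PVar PVal LVar LVal) → Prop

/-- Validity of a hyper-triple ⊨ {P} C {Q}. -/
def HyperTriple {PVar PVal LVar LVal : Type} [DecidableEq PVar]
    (P : HAssn PVar PVal LVar LVal) (C : Cmd PVar PVal)
    (Q : HAssn PVar PVal LVar LVal) : Prop :=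
  ∀ S : Set (EState PVar PVal LVar LVal), P S → Q (sem C S)

/-- The ⊗ operator on hyper-assertions. -/
def otimes {PVar PVal LVar LVal : Type} (Q1 Q2 : HAssn PVar PVal LVar LVal) :
    HAssn PVar PVal LVar LVal :=
  fun S => ∃ S1 S2, S = S1 ∪ S2 ∧ Q1 S1 ∧ Q2 S2

/-- The ⨂_{n ∈ ℕ} operator on indexed families of hyper-assertions. -/
def bigotimes {PVar PVal LVar LVal : Type} (I : ℕ → HAssn PVar PVal LVar LVal) :
    HAssn PVar PVal LVar LVal :=
  fun S => ∃ f : ℕ → Set (EState PVar PVal LVar LVal),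
    S = (⋃ n, f n) ∧ ∀ n, I n (f n)

/-- The core proof system of Hyper Hoare Logic: ⊢ {P} C {Q}. -/
inductive Derivable {PVar PVal LVar LVal : Type} [DecidableEq PVar] :
    HAssn PVar PVal LVar LVal → Cmd PVar PVal → HAssn PVar PVal LVar LVal → Prop where
  | skip (P : HAssn PVar PVal LVar LVal) : Derivable P Cmd.skip P
  | seq {P R Q : HAssn PVar PVal LVar LVal} {C1 C2 : Cmd PVar PVal} :
      Derivable P C1 R → Derivable R C2 Q → Derivable P (Cmd.seq C1 C2) Q
  | choice {P Q1 Q2 : HAssn PVar PVal LVar LVal} {C1 C2 : Cmd PVar PVal} :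
      Derivable P C1 Q1 → Derivable P C2 Q2 →
      Derivable P (Cmd.choice C1 C2) (otimes Q1 Q2)
  | iter {C : Cmd PVar PVal} (I : ℕ → HAssn PVar PVal LVar LVal) :
      (∀ n, Derivable (I n) C (I (n + 1))) →
      Derivable (I 0) (Cmd.iter C) (bigotimes I)
  | cons {P P' Q Q' : HAssn PVar PVal LVar LVal} {C : Cmd PVar PVal} :
      (∀ S, P S → P' S) → (∀ S, Q' S → Q S) → Derivable P' C Q' → Derivable P C Q
  | exist {α : Type} {C : Cmd PVar PVal} (P Q : α → HAssn PVar PVal LVar LVal) :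
      (∀ x : α, Derivable (P x) C (Q x)) →
      Derivable (fun S => ∃ x, P x S) C (fun S => ∃ x, Q x S)
  | assume (P : HAssn PVar PVal LVar LVal) (b : (PVar → PVal) → Prop) :
      Derivable (fun S => P { φ ∈ S | b φ.2 }) (Cmd.assume b) P
  | assign (P : HAssn PVar PVal LVar LVal) (x : PVar) (e : (PVar → PVal) → PVal) :
      Derivable
        (fun S => P { φ | ∃ α ∈ S, φ.1 = α.1 ∧ φ.2 = Function.update α.2 x (e α.2) })
        (Cmd.assign x e) P
  | havoc (P : HAssn PVar PVal LVar LVal) (x : PVar) :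
      Derivable
        (fun S => P { φ | ∃ α ∈ S, ∃ v, φ.1 = α.1 ∧ φ.2 = Function.update α.2 x v })
        (Cmd.havoc x) P

/-!
The extended semantics is compositional: `sem` sends each program constructor to the corresponding
operation on sets (composition for `;`, union for `+`, the union of all iterates for `*`). Each
proof rule is therefore valid, and soundness follows by induction on derivations. For iteration,
`C*` is the reflexive transitive closure of `C`, so `sem C* S` is the union of the sets
`(sem C)^[n] S`; as the `n`-th of them satisfies `I n`, they witness `⨂ I`.
-/

section BigStep

variable {PVar PVal : Type} [DecidableEq PVar] {C C1 C2 : Cmd PVar PVal} {x : PVar}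
  {e : (PVar → PVal) → PVal} {b : (PVar → PVal) → Prop} {σ τ : PVar → PVal}

theorem bigStep_skip_iff : BigStep .skip σ τ ↔ τ = σ := by
  constructor
  · rintro ⟨⟩
    rfl
  · rintro rfl
    exact .skip τ

theorem bigStep_assign_iff :
    BigStep (.assign x e) σ τ ↔ τ = Function.update σ x (e σ) := by
  constructor
  · rintro ⟨⟩
    rfl
  · rintro rfl
    exact .assign x e σ

theorem bigStep_havoc_iff :
    BigStep (.havoc x) σ τ ↔ ∃ v, τ = Function.update σ x v := by
  constructor
  · rintro ⟨⟩
    exact ⟨_, rfl⟩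
  · rintro ⟨v, rfl⟩
    exact .havoc x σ v

theorem bigStep_assume_iff : BigStep (.assume b) σ τ ↔ τ = σ ∧ b σ := by
  constructor
  · rintro ⟨⟩
    exact ⟨rfl, ‹b σ›⟩
  · rintro ⟨rfl, hb⟩
    exact .assume hb

theorem bigStep_seq_iff :
    BigStep (.seq C1 C2) σ τ ↔ ∃ ρ, BigStep C1 σ ρ ∧ BigStep C2 ρ τ := by
  constructor
  · rintro ⟨⟩
    exact ⟨_, ‹_›, ‹_›⟩
  · rintro ⟨ρ, h1, h2⟩
    exact .seq h1 h2

theorem bigStep_choice_iff :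
    BigStep (.choice C1 C2) σ τ ↔ BigStep C1 σ τ ∨ BigStep C2 σ τ := by
  constructor
  · intro h
    cases h with
    | choiceL h1 => exact .inl h1
    | choiceR h2 => exact .inr h2
  · exact Or.rec .choiceL .choiceR

theorem bigStep_iter_iff :
    BigStep (.iter C) σ τ ↔ Relation.ReflTransGen (BigStep C) σ τ := by
  constructor
  · intro h
    generalize hD : Cmd.iter C = D at h
    induction h with
    | iterNil => exact .refl
    | iterCons hstep _ _ ih =>
      cases hD
      exact .head hstep (ih rfl)
    | _ => cases hD
  · intro h
    induction h using Relation.ReflTransGen.head_induction_on with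
    | refl => exact .iterNil
    | head hstep _ ih => exact .iterCons hstep ih

end BigStep

section Sem

variable {PVar PVal LVar LVal : Type} [DecidableEq PVar]

theorem mem_sem {C : Cmd PVar PVal} {S : Set (EState PVar PVal LVar LVal)}
    {φ : EState PVar PVal LVar LVal} :
    φ ∈ sem C S ↔ ∃ σ, (φ.1, σ) ∈ S ∧ BigStep C σ φ.2 :=
  Iff.rfl

theorem sem_skip (S : Set (EState PVar PVal LVar LVal)) : sem .skip S = S := by
  ext φ
  simp [mem_sem, bigStep_skip_iff]

theorem sem_assign (x : PVar) (e : (PVar → PVal) → PVal)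
    (S : Set (EState PVar PVal LVar LVal)) :
    sem (.assign x e) S =
      {φ | ∃ α ∈ S, φ.1 = α.1 ∧ φ.2 = Function.update α.2 x (e α.2)} := by
  ext φ
  simp [mem_sem, bigStep_assign_iff]

theorem sem_havoc (x : PVar) (S : Set (EState PVar PVal LVar LVal)) :
    sem (.havoc x) S =
      {φ | ∃ α ∈ S, ∃ v, φ.1 = α.1 ∧ φ.2 = Function.update α.2 x v} := by
  ext φ
  simp [mem_sem, bigStep_havoc_iff]

theorem sem_assume (b : (PVar → PVal) → Prop) (S : Set (EState PVar PVal LVar LVal)) :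
    sem (.assume b) S = {φ ∈ S | b φ.2} := by
  ext φ
  simp [mem_sem, bigStep_assume_iff]

theorem sem_seq (C1 C2 : Cmd PVar PVal) (S : Set (EState PVar PVal LVar LVal)) :
    sem (.seq C1 C2) S = sem C2 (sem C1 S) := by
  ext φ
  simp only [mem_sem, bigStep_seq_iff]
  grind

theorem sem_choice (C1 C2 : Cmd PVar PVal) (S : Set (EState PVar PVal LVar LVal)) :
    sem (.choice C1 C2) S = sem C1 S ∪ sem C2 S := by
  ext φ
  simp only [Set.mem_union, mem_sem, bigStep_choice_iff, and_or_left, exists_or]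

theorem mem_iterate_sem_succ {C : Cmd PVar PVal} {S : Set (EState PVar PVal LVar LVal)}
    {n : ℕ} {φ : EState PVar PVal LVar LVal} :
    φ ∈ (sem C)^[n + 1] S ↔ ∃ σ, (φ.1, σ) ∈ (sem C)^[n] S ∧ BigStep C σ φ.2 := by
  rw [Function.iterate_succ_apply', mem_sem]

theorem sem_iter (C : Cmd PVar PVal) (S : Set (EState PVar PVal LVar LVal)) :
    sem (.iter C) S = ⋃ n, (sem C)^[n] S := by
  ext ⟨l, τ⟩
  simp only [mem_sem, bigStep_iter_iff, Set.mem_iUnion]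
  constructor
  · rintro ⟨σ, hσ, hreach⟩
    induction hreach with
    | refl => exact ⟨0, hσ⟩
    | tail _ hstep ih =>
      obtain ⟨n, hn⟩ := ih
      exact ⟨n + 1, mem_iterate_sem_succ.2 ⟨_, hn, hstep⟩⟩
  · rintro ⟨n, hn⟩
    induction n generalizing τ with
    | zero => exact ⟨τ, hn, .refl⟩
    | succ n ih =>
      obtain ⟨ρ, hρ, hstep⟩ := mem_iterate_sem_succ.1 hn
      obtain ⟨σ, hσ, hreach⟩ := ih ρ hρ
      exact ⟨σ, hσ, hreach.tail hstep⟩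

end Sem

namespace HyperTriple

variable {PVar PVal LVar LVal : Type} [DecidableEq PVar]
  {P P' Q Q' Q1 Q2 R : HAssn PVar PVal LVar LVal} {C C1 C2 : Cmd PVar PVal}

theorem skip (P : HAssn PVar PVal LVar LVal) : HyperTriple P .skip P := by
  intro S hP
  rwa [sem_skip]

theorem assign (P : HAssn PVar PVal LVar LVal) (x : PVar) (e : (PVar → PVal) → PVal) :
    HyperTriple
      (fun S => P {φ | ∃ α ∈ S, φ.1 = α.1 ∧ φ.2 = Function.update α.2 x (e α.2)})
      (.assign x e) P := by
  intro S hP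
  rwa [sem_assign]

theorem havoc (P : HAssn PVar PVal LVar LVal) (x : PVar) :
    HyperTriple
      (fun S => P {φ | ∃ α ∈ S, ∃ v, φ.1 = α.1 ∧ φ.2 = Function.update α.2 x v})
      (.havoc x) P := by
  intro S hP
  rwa [sem_havoc]

theorem assume (P : HAssn PVar PVal LVar LVal) (b : (PVar → PVal) → Prop) :
    HyperTriple (fun S => P {φ ∈ S | b φ.2}) (.assume b) P := by
  intro S hP
  rwa [sem_assume]

theorem seq (h1 : HyperTriple P C1 R) (h2 : HyperTriple R C2 Q) :
    HyperTriple P (.seq C1 C2) Q := by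
  intro S hP
  rw [sem_seq]
  exact h2 _ (h1 S hP)

theorem choice (h1 : HyperTriple P C1 Q1) (h2 : HyperTriple P C2 Q2) :
    HyperTriple P (.choice C1 C2) (otimes Q1 Q2) :=
  fun S hP => ⟨sem C1 S, sem C2 S, sem_choice C1 C2 S, h1 S hP, h2 S hP⟩

theorem iterate_sem {I : ℕ → HAssn PVar PVal LVar LVal}
    (h : ∀ n, HyperTriple (I n) C (I (n + 1))) {S : Set (EState PVar PVal LVar LVal)}
    (hS : I 0 S) (n : ℕ) : I n ((sem C)^[n] S) := by
  induction n with
  | zero => exact hS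
  | succ n ih =>
    rw [Function.iterate_succ_apply']
    exact h n _ ih

theorem iter {I : ℕ → HAssn PVar PVal LVar LVal}
    (h : ∀ n, HyperTriple (I n) C (I (n + 1))) :
    HyperTriple (I 0) (.iter C) (bigotimes I) :=
  fun S hS => ⟨fun n => (sem C)^[n] S, sem_iter C S, iterate_sem h hS⟩

theorem cons (hP : ∀ S, P S → P' S) (hQ : ∀ S, Q' S → Q S) (h : HyperTriple P' C Q') :
    HyperTriple P C Q :=
  fun S hS => hQ _ (h S (hP S hS))

theorem exist {ι : Sort*} {P Q : ι → HAssn PVar PVal LVar LVal}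
    (h : ∀ i, HyperTriple (P i) C (Q i)) :
    HyperTriple (fun S => ∃ i, P i S) C (fun S => ∃ i, Q i S) :=
  fun S => Exists.imp fun i => h i S

end HyperTriple

/-- Soundness of Hyper Hoare Logic. -/
theorem hyper_hoare_logic_soundness {PVar PVal LVar LVal : Type} [DecidableEq PVar]
    (P Q : HAssn PVar PVal LVar LVal) (C : Cmd PVar PVal)
    (h : Derivable P C Q) : HyperTriple P C Q := by
  induction h with
  | skip P => exact .skip P
  | seq _ _ ih1 ih2 => exact ih1.seq ih2
  | choice _ _ ih1 ih2 => exact ih1.choice ih2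
  | iter _ _ ih => exact .iter ih
  | cons hP hQ _ ih => exact ih.cons hP hQ
  | exist _ _ _ ih => exact .exist ih
  | assume P b => exact .assume P b
  | assign P x e => exact .assign P x e
  | havoc P x => exact .havoc P x
end

section
/- Expressing Cartesian Hoare Logic in Hyper Hoare Logic: let k ≥ 1, let t ∈ LVars, assume LVals contains k distinct values denoted 1, …, k, and let P and Q be sets of k-tuples of extended states that are insensitive to t. Define P'(S) := for all k-tuples φ⃗ of extended states, if for every i ∈ {1,…,k} we have φ_i ∈ S and φ_i^L(t) = i, then φ⃗ ∈ P; and define Q'(S) analogously with Q. Then for every command C, ⊨_CHL(k) {P} C {Q} holds if and only if the hyper-triple ⊨ {P'} C {Q'} holds. -/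
/-- Lifting of the big-step semantics to k-tuples of extended states:
each component executes C, and logical states are unchanged. -/
def KStep {PVar PVal LVar LVal : Type} [DecidableEq PVar] {k : ℕ} (C : Cmd PVar PVal)
    (φs φs' : Fin k → EState PVar PVal LVar LVal) : Prop :=
  ∀ i : Fin k, BigStep C (φs i).2 (φs' i).2 ∧ (φs i).1 = (φs' i).1

/-- A set of k-tuples of extended states is insensitive to the logical variable t iff
membership is unchanged when the values of t in the logical states of any components
are replaced by arbitrary values. -/
def Insensitive {PVar PVal LVar LVal : Type} [DecidableEq LVar] {k : ℕ} (t : LVar)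
    (T : Set (Fin k → EState PVar PVal LVar LVal)) : Prop :=
  ∀ (φs : Fin k → EState PVar PVal LVar LVal) (g : Fin k → LVal),
    φs ∈ T ↔ (fun i => (Function.update (φs i).1 t (g i), (φs i).2)) ∈ T

/-- Cartesian Hoare Logic triples over sets of k-tuples of extended states. -/
def CHLTriple {PVar PVal LVar LVal : Type} [DecidableEq PVar] {k : ℕ}
    (P : Set (Fin k → EState PVar PVal LVar LVal)) (C : Cmd PVar PVal)
    (Q : Set (Fin k → EState PVar PVal LVar LVal)) : Prop :=
  ∀ φs ∈ P, ∀ φs', KStep C φs φs' → φs' ∈ Q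

/-!
Encode a `k`-tuple as a set of states by letting `t` record each component's index. Since the tags
are distinct, the only tagged tuple drawn from the components of a tagged tuple is that tuple
itself, and `sem` acts on tagged tuples exactly as `k` parallel executions. Hence the hyper-triple
amounts to the Cartesian triple restricted to tagged initial tuples. As execution neither reads nor
writes logical variables, insensitivity to `t` allows any pair of initial and final tuples to be
retagged, which removes the restriction.
-/

section

variable {PVar PVal LVar LVal : Type} {k : ℕ} {t : LVar} {num : Fin k → LVal}
  {P Q : Set (Fin k → EState PVar PVal LVar LVal)}
  {φs φs' ψs : Fin k → EState PVar PVal LVar LVal}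

/-- The `k`-tuples whose `i`-th component stores the tag `num i` in the logical variable `t`. -/
def taggedTuples (PVar PVal : Type) (t : LVar) (num : Fin k → LVal) :
    Set (Fin k → EState PVar PVal LVar LVal) :=
  {φs | ∀ i, (φs i).1 t = num i}

/-- The hyper-assertion encoding a set `T` of `k`-tuples (`P'` and `Q'` in the informal statement):
every tagged tuple drawn from the given set of states lies in `T`. -/
def taggedHAssn (t : LVar) (num : Fin k → LVal) (T : Set (Fin k → EState PVar PVal LVar LVal)) :
    HAssn PVar PVal LVar LVal :=
  fun S => ∀ φs : Fin k → EState PVar PVal LVar LVal,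
    (∀ i, φs i ∈ S ∧ (φs i).1 t = num i) → φs ∈ T

theorem eq_of_mem_taggedTuples_of_forall_mem_range (hnum : Function.Injective num)
    (hφs : φs ∈ taggedTuples PVar PVal t num) (hψs : ψs ∈ taggedTuples PVar PVal t num)
    (hrange : ∀ i, ψs i ∈ Set.range φs) : ψs = φs := by
  funext i
  obtain ⟨j, hj⟩ := hrange i
  have tags_eq : num j = num i := by rw [← hφs j, hj, hψs i]
  rw [← hj, hnum tags_eq]

theorem taggedHAssn_range (hnum : Function.Injective num)
    (hφs : φs ∈ taggedTuples PVar PVal t num) (hP : φs ∈ P) :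
    taggedHAssn t num P (Set.range φs) := by
  intro ψs hψs
  have ψs_eq : ψs = φs := eq_of_mem_taggedTuples_of_forall_mem_range hnum hφs
    (fun i => (hψs i).2) (fun i => (hψs i).1)
  exact ψs_eq ▸ hP

section Semantics

variable [DecidableEq PVar] {C : Cmd PVar PVal}

theorem forall_mem_sem_iff_exists_kStep {S : Set (EState PVar PVal LVar LVal)} :
    (∀ i, φs' i ∈ sem C S) ↔ ∃ φs, (∀ i, φs i ∈ S) ∧ KStep C φs φs' := by
  constructor
  · intro hφs'
    choose σ hσ hstep using hφs'
    exact ⟨fun i => ((φs' i).1, σ i), hσ, fun i => ⟨hstep i, rfl⟩⟩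
  · rintro ⟨φs, hφs, hstep⟩ i
    exact ⟨(φs i).2, (hstep i).2 ▸ hφs i, (hstep i).1⟩

theorem KStep.mem_taggedTuples_iff (hstep : KStep C φs φs') :
    φs ∈ taggedTuples PVar PVal t num ↔ φs' ∈ taggedTuples PVar PVal t num :=
  forall_congr' fun i => by rw [(hstep i).2]

theorem hyperTriple_taggedHAssn_iff (hnum : Function.Injective num) :
    HyperTriple (taggedHAssn t num P) C (taggedHAssn t num Q) ↔
      CHLTriple (P ∩ taggedTuples PVar PVal t num) C Q := by
  constructor
  · rintro hyper φs ⟨hP, htag⟩ φs' hstep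
    have mem_sem : ∀ i, φs' i ∈ sem C (Set.range φs) :=
      forall_mem_sem_iff_exists_kStep.2 ⟨φs, Set.mem_range_self, hstep⟩
    have htag' : φs' ∈ taggedTuples PVar PVal t num := hstep.mem_taggedTuples_iff.1 htag
    exact hyper _ (taggedHAssn_range hnum htag hP) φs' fun i => ⟨mem_sem i, htag' i⟩
  · intro chl S hS φs' hφs'
    obtain ⟨φs, hφs, hstep⟩ := forall_mem_sem_iff_exists_kStep.1 fun i => (hφs' i).1
    have htag : φs ∈ taggedTuples PVar PVal t num :=
      hstep.mem_taggedTuples_iff.2 fun i => (hφs' i).2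
    exact chl φs ⟨hS φs fun i => ⟨hφs i, htag i⟩, htag⟩ φs' hstep

end Semantics

section Retagging

variable [DecidableEq LVar]

/-- Overwrite the logical variable `t` with the value `g i` in each component `i` of a tuple. -/
def retag (t : LVar) (g : Fin k → LVal) (φs : Fin k → EState PVar PVal LVar LVal) :
    Fin k → EState PVar PVal LVar LVal :=
  fun i => (Function.update (φs i).1 t (g i), (φs i).2)

theorem retag_mem_taggedTuples : retag t num φs ∈ taggedTuples PVar PVal t num :=
  fun _ => Function.update_self ..

theorem Insensitive.retag_mem_iff (hP : Insensitive t P) : retag t num φs ∈ P ↔ φs ∈ P :=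
  (hP φs num).symm

variable [DecidableEq PVar] {C : Cmd PVar PVal}

theorem KStep.retag (hstep : KStep C φs φs') : KStep C (retag t num φs) (retag t num φs') :=
  fun i => ⟨(hstep i).1, by simp only [_root_.retag, (hstep i).2]⟩

theorem chlTriple_inter_taggedTuples_iff (hP : Insensitive t P) (hQ : Insensitive t Q) :
    CHLTriple (P ∩ taggedTuples PVar PVal t num) C Q ↔ CHLTriple P C Q := by
  constructor
  · intro chl φs hφs φs' hstep
    have retag_mem_Q : retag t num φs' ∈ Q :=
      chl _ ⟨hP.retag_mem_iff.2 hφs, retag_mem_taggedTuples⟩ _ hstep.retag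
    exact hQ.retag_mem_iff.1 retag_mem_Q
  · exact fun chl φs hφs => chl φs hφs.1

end Retagging

end

/-- Expressing Cartesian Hoare Logic in Hyper Hoare Logic. -/
theorem expressing_CHL_in_HHL {PVar PVal LVar LVal : Type}
    [DecidableEq PVar] [DecidableEq LVar]
    (k : ℕ) (hk : 1 ≤ k) (t : LVar)
    (num : Fin k → LVal) (hnum : Function.Injective num)
    (P Q : Set (Fin k → EState PVar PVal LVar LVal))
    (hPt : Insensitive t P) (hQt : Insensitive t Q)
    (C : Cmd PVar PVal) :
    CHLTriple P C Q ↔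
      HyperTriple
        (fun S => ∀ φs : Fin k → EState PVar PVal LVar LVal,
          (∀ i, φs i ∈ S ∧ (φs i).1 t = num i) → φs ∈ P)
        C
        (fun S => ∀ φs : Fin k → EState PVar PVal LVar LVal,
          (∀ i, φs i ∈ S ∧ (φs i).1 t = num i) → φs ∈ Q) := by
  calc CHLTriple P C Q
    _ ↔ CHLTriple (P ∩ taggedTuples PVar PVal t num) C Q :=
      (chlTriple_inter_taggedTuples_iff hPt hQt).symm
    _ ↔ HyperTriple (taggedHAssn t num P) C (taggedHAssn t num Q) :=
      (hyperTriple_taggedHAssn_iff hnum).symm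
end

section
/- Expressing k-Incorrectness Logic in Hyper Hoare Logic: let k ≥ 1, let t and u be distinct logical variables, assume LVals contains k distinct values denoted 1, …, k and that there is an injection from the set of k-tuples of program states into LVals. Let P and Q be sets of k-tuples of extended states that are insensitive to t and to u, and assume P depends only on program variables. Define P'(S) := for every φ⃗ ∈ P, if φ_i^L(t) = i for every i ∈ {1,…,k}, then there exists v ∈ LVals such that for every i, the state obtained from φ_i by updating its logical state at u to v belongs to S; and define Q'(S) analogously with Q. Then for every command C, ⊨_{k-IL} {P} C {Q} holds if and only if the hyper-triple ⊨ {P'} C {Q'} holds. -/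
/-- A set of k-tuples of extended states depends only on program variables iff
membership is unchanged when the logical states of its components are replaced
arbitrarily. -/
def DependsOnlyOnPVars {PVar PVal LVar LVal : Type} {k : ℕ}
    (T : Set (Fin k → EState PVar PVal LVar LVal)) : Prop :=
  ∀ (φs : Fin k → EState PVar PVal LVar LVal) (L : Fin k → (LVar → LVal)),
    φs ∈ T ↔ (fun i => (L i, (φs i).2)) ∈ T

/-- k-Incorrectness Logic triples over sets of k-tuples of extended states. -/
def KILTriple {PVar PVal LVar LVal : Type} [DecidableEq PVar] {k : ℕ}
    (P : Set (Fin k → EState PVar PVal LVar LVal)) (C : Cmd PVar PVal)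
    (Q : Set (Fin k → EState PVar PVal LVar LVal)) : Prop :=
  ∀ φs' ∈ Q, ∃ φs ∈ P, KStep C φs φs'

/-!
From the incorrectness triple, every tuple in `Q` is reached from a tuple in `P` with the same
logical states, so the witness `v` for the latter also serves the former.

Conversely, apply the hyper-triple to a set in which `t` records the position of a state in a tuple
of `P` and `u` records an encoding of all the program states of that tuple. Executions preserve
logical states, so the initial states of `k` final states that share the same `u` and carry the
tags `1, …, k` come from a single tuple of `P`, each at its own position.
-/

section TupleEncoding

variable {ι : Type*} {PVar PVal LVar LVal : Type}

/-- The hyper-assertion `P'` (or `Q'`) of the translation, for a set `T` of tuples: every tuple of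
`T` tagged by `num` in `t` is contained in the set of states, up to a common value of `u`. -/
def ContainsTagged [DecidableEq LVar] (t u : LVar) (num : ι → LVal)
    (T : Set (ι → EState PVar PVal LVar LVal)) : HAssn PVar PVal LVar LVal :=
  fun S => ∀ φs ∈ T, (∀ i, (φs i).1 t = num i) →
    ∃ v : LVal, ∀ i, (Function.update (φs i).1 u v, (φs i).2) ∈ S

/-- The states whose program part is a component of a tuple of `T`, with `t` holding the position
of that component and `u` the encoding of the program states of the whole tuple. The other logical
variables are unconstrained. -/
def encodedStates (t u : LVar) (num : ι → LVal) (emb : (ι → PVar → PVal) → LVal)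
    (T : Set (ι → EState PVar PVal LVar LVal)) : Set (EState PVar PVal LVar LVal) :=
  {ψ | ∃ φs ∈ T, ∃ i, ψ.1 t = num i ∧ ψ.1 u = emb (fun j => (φs j).2) ∧ ψ.2 = (φs i).2}

theorem containsTagged_encodedStates [DecidableEq LVar] {t u : LVar} (htu : t ≠ u)
    (num : ι → LVal) (emb : (ι → PVar → PVal) → LVal)
    (T : Set (ι → EState PVar PVal LVar LVal)) :
    ContainsTagged t u num T (encodedStates t u num emb T) := by
  intro φs hφs htag
  refine ⟨emb (fun j => (φs j).2), fun i => ⟨φs, hφs, i, ?_, Function.update_self .., rfl⟩⟩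
  exact (Function.update_of_ne htu ..).trans (htag i)

theorem exists_mem_of_forall_mem_encodedStates [Nonempty ι] {t u : LVar} {num : ι → LVal}
    (hnum : Function.Injective num) {emb : (ι → PVar → PVal) → LVal}
    (hemb : Function.Injective emb) {T : Set (ι → EState PVar PVal LVar LVal)}
    {ψs : ι → EState PVar PVal LVar LVal} {v : LVal} (htag : ∀ i, (ψs i).1 t = num i)
    (hcode : ∀ i, (ψs i).1 u = v) (hψs : ∀ i, ψs i ∈ encodedStates t u num emb T) :
    ∃ φs ∈ T, ∀ i, (φs i).2 = (ψs i).2 := by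
  have hsource : ∀ i, ∃ φs ∈ T, emb (fun j => (φs j).2) = v ∧ (φs i).2 = (ψs i).2 := by
    intro i
    obtain ⟨φs, hφs, j, hj, hemb_eq, hprog⟩ := hψs i
    obtain rfl : i = j := hnum ((htag i).symm.trans hj)
    exact ⟨φs, hφs, hemb_eq.symm.trans (hcode i), hprog.symm⟩
  obtain ⟨φs, hφs, hφs_code, -⟩ := hsource (Classical.arbitrary ι)
  refine ⟨φs, hφs, fun i => ?_⟩
  obtain ⟨χs, -, hχs_code, hχs_prog⟩ := hsource i
  have hprogs : (fun j => (φs j).2) = fun j => (χs j).2 := hemb (hφs_code.trans hχs_code.symm)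
  exact (congrFun hprogs i).trans hχs_prog

end TupleEncoding

section Translation

variable {PVar PVal LVar LVal : Type} [DecidableEq PVar] [DecidableEq LVar] {k : ℕ} {t u : LVar}
  {num : Fin k → LVal} {P Q : Set (Fin k → EState PVar PVal LVar LVal)} {C : Cmd PVar PVal}

theorem KILTriple.hyperTriple_containsTagged (h : KILTriple P C Q) :
    HyperTriple (ContainsTagged t u num P) C (ContainsTagged t u num Q) := by
  intro S hS φs' hφs' htag
  obtain ⟨φs, hφs, hstep⟩ := h φs' hφs'
  have hlog : ∀ i, (φs i).1 = (φs' i).1 := fun i => (hstep i).2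
  obtain ⟨v, hv⟩ := hS φs hφs fun i => (congrFun (hlog i) t).trans (htag i)
  exact ⟨v, fun i => ⟨(φs i).2, hlog i ▸ hv i, (hstep i).1⟩⟩

theorem HyperTriple.kilTriple (hk : 1 ≤ k) (htu : t ≠ u) (hnum : Function.Injective num)
    {emb : (Fin k → PVar → PVal) → LVal} (hemb : Function.Injective emb)
    (hP : DependsOnlyOnPVars P) (hQ : Insensitive t Q)
    (h : HyperTriple (ContainsTagged t u num P) C (ContainsTagged t u num Q)) :
    KILTriple P C Q := by
  intro φs' hφs'
  have : Nonempty (Fin k) := ⟨⟨0, hk⟩⟩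
  obtain ⟨v, hv⟩ := h _ (containsTagged_encodedStates htu num emb P) _
    ((hQ φs' num).1 hφs') fun i => Function.update_self ..
  choose σs hσs hstep using hv
  obtain ⟨φs, hφs, hprog⟩ := exists_mem_of_forall_mem_encodedStates hnum hemb
    (fun i => (Function.update_of_ne htu ..).trans (Function.update_self ..))
    (fun i => Function.update_self ..) hσs
  exact ⟨fun i => ((φs' i).1, (φs i).2), (hP φs _).1 hφs,
    fun i => ⟨(hprog i).symm ▸ hstep i, rfl⟩⟩

theorem expressing_kIL_in_HHL_general (hk : 1 ≤ k) (htu : t ≠ u)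
    (hnum : Function.Injective num) {emb : (Fin k → PVar → PVal) → LVal}
    (hemb : Function.Injective emb) (hP : DependsOnlyOnPVars P) (hQ : Insensitive t Q) :
    KILTriple P C Q ↔ HyperTriple (ContainsTagged t u num P) C (ContainsTagged t u num Q) :=
  ⟨KILTriple.hyperTriple_containsTagged, HyperTriple.kilTriple hk htu hnum hemb hP hQ⟩

end Translation

/-- Expressing k-Incorrectness Logic in Hyper Hoare Logic. -/
theorem expressing_kIL_in_HHL {PVar PVal LVar LVal : Type}
    [DecidableEq PVar] [DecidableEq LVar]
    (k : ℕ) (hk : 1 ≤ k) (t u : LVar) (htu : t ≠ u)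
    (num : Fin k → LVal) (hnum : Function.Injective num)
    (emb : (Fin k → (PVar → PVal)) → LVal) (hemb : Function.Injective emb)
    (P Q : Set (Fin k → EState PVar PVal LVar LVal))
    (hPt : Insensitive t P) (hPu : Insensitive u P)
    (hQt : Insensitive t Q) (hQu : Insensitive u Q)
    (hPprog : DependsOnlyOnPVars P)
    (C : Cmd PVar PVal) :
    KILTriple P C Q ↔
      HyperTriple
        (fun S => ∀ φs ∈ P, (∀ i : Fin k, (φs i).1 t = num i) →
          ∃ v : LVal, ∀ i : Fin k, (Function.update (φs i).1 u v, (φs i).2) ∈ S)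
        C
        (fun S => ∀ φs' ∈ Q, (∀ i : Fin k, (φs' i).1 t = num i) →
          ∃ v : LVal, ∀ i : Fin k, (Function.update (φs' i).1 u v, (φs' i).2) ∈ S) :=
  expressing_kIL_in_HHL_general hk htu hnum hemb hPprog hQt
end

section
/- Expressing Forward Underapproximation in Hyper Hoare Logic: for all sets P, Q of extended states and every command C, the Forward Underapproximation triple ⊨_FU {P} C {Q} holds if and only if the hyper-triple ⊨ {λS. P ∩ S ≠ ∅} C {λS. Q ∩ S ≠ ∅} holds. -/
/-- Forward Underapproximation triples over sets of extended states. -/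
def FUTriple {PVar PVal LVar LVal : Type} [DecidableEq PVar]
    (P : Set (EState PVar PVal LVar LVal)) (C : Cmd PVar PVal)
    (Q : Set (EState PVar PVal LVar LVal)) : Prop :=
  ∀ φ ∈ P, ∃ σ' : PVar → PVal, BigStep C φ.2 σ' ∧ (φ.1, σ') ∈ Q

/-! As `sem C` is monotone, whether every set meeting `P` has an image meeting `Q` can be tested on
the singletons `{φ}` with `φ ∈ P`, and `sem C {φ}` consists of the outcomes of `C` from `φ`. -/

theorem forall_inter_nonempty_imp_iff_forall_singleton {α β : Type*} {f : Set α → Set β}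
    (hf : Monotone f) {P : Set α} {Q : Set β} :
    (∀ S, (P ∩ S).Nonempty → (Q ∩ f S).Nonempty) ↔ ∀ a ∈ P, (Q ∩ f {a}).Nonempty := by
  constructor
  · intro h a ha
    exact h {a} (Set.inter_singleton_nonempty.mpr ha)
  · rintro h S ⟨a, haP, haS⟩
    have hsub : f {a} ⊆ f S := hf (Set.singleton_subset_iff.mpr haS)
    exact (h a haP).mono (Set.inter_subset_inter_right Q hsub)

section

variable {PVar PVal LVar LVal : Type} [DecidableEq PVar]

theorem sem_mono (C : Cmd PVar PVal) :
    Monotone (sem C : Set (EState PVar PVal LVar LVal) → Set (EState PVar PVal LVar LVal)) :=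
  fun _ _ hST _ ⟨σ, hσ, hstep⟩ => ⟨σ, hST hσ, hstep⟩

theorem mem_sem_singleton {C : Cmd PVar PVal} {φ ψ : EState PVar PVal LVar LVal} :
    ψ ∈ sem C {φ} ↔ ψ.1 = φ.1 ∧ BigStep C φ.2 ψ.2 := by
  simp [sem, Prod.ext_iff, and_assoc]

theorem inter_sem_singleton_nonempty {C : Cmd PVar PVal} {φ : EState PVar PVal LVar LVal}
    {Q : Set (EState PVar PVal LVar LVal)} :
    (Q ∩ sem C {φ}).Nonempty ↔ ∃ σ', BigStep C φ.2 σ' ∧ (φ.1, σ') ∈ Q := by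
  constructor
  · rintro ⟨⟨l, σ'⟩, hQ, hsem⟩
    obtain ⟨rfl, hstep⟩ := mem_sem_singleton.mp hsem
    exact ⟨σ', hstep, hQ⟩
  · rintro ⟨σ', hstep, hQ⟩
    exact ⟨(φ.1, σ'), hQ, mem_sem_singleton.mpr ⟨rfl, hstep⟩⟩

theorem fuTriple_iff_forall_inter_sem_singleton_nonempty
    {P Q : Set (EState PVar PVal LVar LVal)} {C : Cmd PVar PVal} :
    FUTriple P C Q ↔ ∀ φ ∈ P, (Q ∩ sem C {φ}).Nonempty :=
  forall₂_congr fun _ _ => inter_sem_singleton_nonempty.symm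

end

/-- Expressing Forward Underapproximation in Hyper Hoare Logic. -/
theorem expressing_FU_in_HHL {PVar PVal LVar LVal : Type} [DecidableEq PVar]
    (P Q : Set (EState PVar PVal LVar LVal)) (C : Cmd PVar PVal) :
    FUTriple P C Q ↔ HyperTriple (fun S => P ∩ S ≠ ∅) C (fun S => Q ∩ S ≠ ∅) := by
  simp only [HyperTriple, ← Set.nonempty_iff_ne_empty]
  rw [fuTriple_iff_forall_inter_sem_singleton_nonempty,
    forall_inter_nonempty_imp_iff_forall_singleton (sem_mono C)]
end

section
/- Expressing k-Forward Underapproximation in Hyper Hoare Logic: let k ≥ 1, let t ∈ LVars, assume LVals contains k distinct values denoted 1, …, k, and let P and Q be sets of k-tuples of extended states that are insensitive to t. Define P'(S) := there exists φ⃗ ∈ P such that for every i ∈ {1,…,k}, φ_i ∈ S and φ_i^L(t) = i; and define Q'(S) analogously with Q. Then for every command C, ⊨_{k-FU} {P} C {Q} holds if and only if the hyper-triple ⊨ {P'} C {Q'} holds. -/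
/-- k-Forward Underapproximation triples over sets of k-tuples of extended states. -/
def KFUTriple {PVar PVal LVar LVal : Type} [DecidableEq PVar] {k : ℕ}
    (P : Set (Fin k → EState PVar PVal LVar LVal)) (C : Cmd PVar PVal)
    (Q : Set (Fin k → EState PVar PVal LVar LVal)) : Prop :=
  ∀ φs ∈ P, ∃ φs' ∈ Q, KStep C φs φs'

/-!
The logical variable `t` names the components of a tuple: when `φᵢᴸ(t) = i` for every `i`, the set
of components determines the tuple. Since commands preserve logical states, a state reached from
the set `{φ₁, …, φₖ}` and tagged `i` can only come from `φᵢ`, so executing `C` on the set and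
executing it componentwise agree on tagged tuples. Insensitivity to `t` allows any tuple to be
tagged beforehand and its original values of `t` to be restored afterwards.
-/

section Tuples

variable {ι : Type*} {PVar PVal LVar LVal : Type}

/-- The tuple `φs` with the value of the logical variable `t` in its `i`-th component replaced by
`g i`; this is the replacement that `Insensitive` quantifies over. -/
def updateLogical [DecidableEq LVar] (t : LVar) (g : ι → LVal)
    (φs : ι → EState PVar PVal LVar LVal) : ι → EState PVar PVal LVar LVal :=
  fun i => (Function.update (φs i).1 t (g i), (φs i).2)

/-- The tuples whose `i`-th component carries the tag `tag i` in the logical variable `t`. -/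
def Tagged (t : LVar) (tag : ι → LVal) : Set (ι → EState PVar PVal LVar LVal) :=
  {φs | ∀ i, (φs i).1 t = tag i}

/-- The hyper-assertion that some tuple of `T` has all its components in the given set. -/
def ContainsTuple (T : Set (ι → EState PVar PVal LVar LVal)) : HAssn PVar PVal LVar LVal :=
  fun S => ∃ φs ∈ T, ∀ i, φs i ∈ S

theorem updateLogical_mem_tagged [DecidableEq LVar] (t : LVar) (tag : ι → LVal)
    (φs : ι → EState PVar PVal LVar LVal) : updateLogical t tag φs ∈ Tagged t tag :=
  fun _ => Function.update_self ..

theorem updateLogical_updateLogical_self [DecidableEq LVar] (t : LVar) (g : ι → LVal)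
    (φs : ι → EState PVar PVal LVar LVal) :
    updateLogical t (fun i => (φs i).1 t) (updateLogical t g φs) = φs := by
  funext i
  simp [updateLogical]

theorem containsTuple_inter_tagged (T : Set (ι → EState PVar PVal LVar LVal)) (t : LVar)
    (tag : ι → LVal) :
    ContainsTuple (T ∩ Tagged t tag) =
      fun S => ∃ φs ∈ T, ∀ i, φs i ∈ S ∧ (φs i).1 t = tag i := by
  funext S
  simp only [ContainsTuple, Tagged, Set.mem_inter_iff, Set.mem_ofPred_eq, forall_and, and_assoc,
    and_comm (a := ∀ _, _ ∈ S)]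

theorem mem_sem_range [DecidableEq PVar] {C : Cmd PVar PVal}
    {φs : ι → EState PVar PVal LVar LVal} {φ' : EState PVar PVal LVar LVal} :
    φ' ∈ sem C (Set.range φs) ↔ ∃ j, BigStep C (φs j).2 φ'.2 ∧ (φs j).1 = φ'.1 := by
  constructor
  · rintro ⟨σ, ⟨j, hj⟩, hstep⟩
    exact ⟨j, by rwa [hj], by rw [hj]⟩
  · rintro ⟨j, hstep, hlog⟩
    exact ⟨(φs j).2, ⟨j, Prod.ext hlog rfl⟩, hstep⟩

end Tuples

section Triples

variable {PVar PVal LVar LVal : Type} [DecidableEq PVar] {k : ℕ} {C : Cmd PVar PVal}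
  {t : LVar} {tag : Fin k → LVal} {φs φs' : Fin k → EState PVar PVal LVar LVal}
  {P Q : Set (Fin k → EState PVar PVal LVar LVal)}

theorem KStep.mem_sem {S : Set (EState PVar PVal LVar LVal)} (hstep : KStep C φs φs')
    (hS : ∀ i, φs i ∈ S) (i : Fin k) : φs' i ∈ sem C S :=
  ⟨(φs i).2, (hstep i).2 ▸ hS i, (hstep i).1⟩

theorem KStep.mem_tagged (hstep : KStep C φs φs') (htag : φs ∈ Tagged t tag) :
    φs' ∈ Tagged t tag :=
  fun i => (hstep i).2 ▸ htag i

theorem KStep.updateLogical [DecidableEq LVar] (hstep : KStep C φs φs') (t : LVar)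
    (g : Fin k → LVal) : KStep C (updateLogical t g φs) (updateLogical t g φs') :=
  fun i => ⟨(hstep i).1, by simp only [_root_.updateLogical, (hstep i).2]⟩

theorem kStep_of_mem_sem_range (htag_inj : Function.Injective tag) (htag : φs ∈ Tagged t tag)
    (htag' : φs' ∈ Tagged t tag) (hsem : ∀ i, φs' i ∈ sem C (Set.range φs)) :
    KStep C φs φs' := by
  intro i
  obtain ⟨j, hstep, hlog⟩ := mem_sem_range.mp (hsem i)
  have hji : j = i := htag_inj <| calc
    tag j = (φs j).1 t := (htag j).symm
    _ = (φs' i).1 t := congrFun hlog t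
    _ = tag i := htag' i
  subst hji
  exact ⟨hstep, hlog⟩

theorem KFUTriple.hyperTriple_containsTuple (h : KFUTriple P C Q) :
    HyperTriple (ContainsTuple P) C (ContainsTuple Q) := by
  rintro S ⟨φs, hP, hS⟩
  obtain ⟨φs', hQ, hstep⟩ := h φs hP
  exact ⟨φs', hQ, hstep.mem_sem hS⟩

theorem kfuTriple_iff_hyperTriple_containsTuple (htag_inj : Function.Injective tag)
    (hP : P ⊆ Tagged t tag) (hQ : Q ⊆ Tagged t tag) :
    KFUTriple P C Q ↔ HyperTriple (ContainsTuple P) C (ContainsTuple Q) := by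
  refine ⟨KFUTriple.hyperTriple_containsTuple, fun h φs hφs => ?_⟩
  obtain ⟨φs', hφs', hsem⟩ := h (Set.range φs) ⟨φs, hφs, Set.mem_range_self⟩
  exact ⟨φs', hφs', kStep_of_mem_sem_range htag_inj (hP hφs) (hQ hφs') hsem⟩

theorem KFUTriple.inter_tagged (h : KFUTriple P C Q) (t : LVar) (tag : Fin k → LVal) :
    KFUTriple (P ∩ Tagged t tag) C (Q ∩ Tagged t tag) := by
  rintro φs ⟨hP, htag⟩
  obtain ⟨φs', hQ, hstep⟩ := h φs hP
  exact ⟨φs', ⟨hQ, hstep.mem_tagged htag⟩, hstep⟩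

theorem kfuTriple_inter_tagged_iff [DecidableEq LVar] (hPt : Insensitive t P)
    (hQt : Insensitive t Q) (tag : Fin k → LVal) :
    KFUTriple (P ∩ Tagged t tag) C (Q ∩ Tagged t tag) ↔ KFUTriple P C Q := by
  refine ⟨fun h φs hP => ?_, fun h => h.inter_tagged t tag⟩
  obtain ⟨φs', ⟨hQ, -⟩, hstep⟩ :=
    h (updateLogical t tag φs) ⟨(hPt φs tag).mp hP, updateLogical_mem_tagged t tag φs⟩
  let original : Fin k → LVal := fun i => (φs i).1 t
  have hrestored : KStep C φs (updateLogical t original φs') := by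
    simpa only [original, updateLogical_updateLogical_self] using hstep.updateLogical t original
  exact ⟨updateLogical t original φs', (hQt φs' original).mp hQ, hrestored⟩

end Triples

/-- Expressing k-Forward Underapproximation in Hyper Hoare Logic. -/
theorem expressing_kFU_in_HHL {PVar PVal LVar LVal : Type}
    [DecidableEq PVar] [DecidableEq LVar]
    (k : ℕ) (hk : 1 ≤ k) (t : LVar)
    (num : Fin k → LVal) (hnum : Function.Injective num)
    (P Q : Set (Fin k → EState PVar PVal LVar LVal))
    (hPt : Insensitive t P) (hQt : Insensitive t Q)
    (C : Cmd PVar PVal) :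
    KFUTriple P C Q ↔
      HyperTriple
        (fun S => ∃ φs ∈ P, ∀ i : Fin k, φs i ∈ S ∧ (φs i).1 t = num i)
        C
        (fun S => ∃ φs' ∈ Q, ∀ i : Fin k, φs' i ∈ S ∧ (φs' i).1 t = num i) := by
  calc KFUTriple P C Q
    _ ↔ KFUTriple (P ∩ Tagged t num) C (Q ∩ Tagged t num) :=
      (kfuTriple_inter_tagged_iff hPt hQt num).symm
    _ ↔ HyperTriple (ContainsTuple (P ∩ Tagged t num)) C (ContainsTuple (Q ∩ Tagged t num)) :=
      kfuTriple_iff_hyperTriple_containsTuple hnum Set.inter_subset_right Set.inter_subset_right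
    _ ↔ _ := by rw [containsTuple_inter_tagged, containsTuple_inter_tagged]
end

section
/- Expressing k-Universal Existential triples (RHLE-style) in Hyper Hoare Logic: let k1, k2 ≥ 1, let t and u be distinct logical variables, assume LVals contains distinct values denoted 1, 2, …, max(k1,k2), and let P and Q be sets of (k1+k2)-tuples of extended states that are insensitive to t and to u. For n ∈ {1,2} and a set S of extended states, say T_n(φ⃗, S) holds iff for every i ∈ {1,…,k_n}, φ_i ∈ S, φ_i^L(t) = i and φ_i^L(u) = n. Define P'(S) := (for every i ∈ {1,…,k2} there exists φ ∈ S with φ^L(t) = i and φ^L(u) = 2) and (for all tuples φ⃗ of length k1 and γ⃗ of length k2, if T_1(φ⃗, S) and T_2(γ⃗, S) then (φ⃗, γ⃗) ∈ P); define Q'(S) := for every tuple φ⃗' of length k1 with T_1(φ⃗', S), there exists a tuple γ⃗' of length k2 with T_2(γ⃗', S) and (φ⃗', γ⃗') ∈ Q. Then for every command C, ⊨_{UE(k1,k2)} {P} C {Q} holds if and only if the hyper-triple ⊨ {P'} C {Q'} holds. -/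
/-- Insensitivity to a logical variable for a set of pairs of a k1-tuple and a
k2-tuple of extended states. -/
def InsensPair {PVar PVal LVar LVal : Type} [DecidableEq LVar] {k1 k2 : ℕ} (t : LVar)
    (T : Set ((Fin k1 → EState PVar PVal LVar LVal) × (Fin k2 → EState PVar PVal LVar LVal))) :
    Prop :=
  ∀ (p : (Fin k1 → EState PVar PVal LVar LVal) × (Fin k2 → EState PVar PVal LVar LVal))
    (g1 : Fin k1 → LVal) (g2 : Fin k2 → LVal),
    p ∈ T ↔
      ((fun i => (Function.update (p.1 i).1 t (g1 i), (p.1 i).2)),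
       (fun i => (Function.update (p.2 i).1 t (g2 i), (p.2 i).2))) ∈ T

/-- k-Universal Existential (RHLE-style) triples. -/
def UETriple {PVar PVal LVar LVal : Type} [DecidableEq PVar] {k1 k2 : ℕ}
    (P : Set ((Fin k1 → EState PVar PVal LVar LVal) × (Fin k2 → EState PVar PVal LVar LVal)))
    (C : Cmd PVar PVal)
    (Q : Set ((Fin k1 → EState PVar PVal LVar LVal) × (Fin k2 → EState PVar PVal LVar LVal))) :
    Prop :=
  ∀ p ∈ P, ∀ φs' : Fin k1 → EState PVar PVal LVar LVal, KStep C p.1 φs' →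
    ∃ γs' : Fin k2 → EState PVar PVal LVar LVal, KStep C p.2 γs' ∧ (φs', γs') ∈ Q

/-!
The tags `(t, u)` let a single set of states carry a pair of tuples. A command preserves logical
states, so the tagged tuples of `sem C S` are exactly the `KStep`-successors of the tagged tuples
of `S`; this gives the step from the UE triple to the hyper-triple. Conversely, overwrite `t` and
`u` in a pair `(φs, γs) ∈ P` by the appropriate tags and let `S` be the set of all resulting states:
its only tagged tuples are the two overwritten ones, and insensitivity of `P` and `Q` allows the
overwriting to be undone.
-/

section Tagging

variable {PVar PVal LVar LVal : Type} {ι κ : Type*}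

/-- The predicate `T_n(φs, S)`: `φs` is a family of states of `S` whose `i`-th member carries the
index `a i` in `t` and the class label `b` in `u`. -/
def IsTagged (t u : LVar) (a : ι → LVal) (b : LVal) (S : Set (EState PVar PVal LVar LVal))
    (φs : ι → EState PVar PVal LVar LVal) : Prop :=
  ∀ i, φs i ∈ S ∧ (φs i).1 t = a i ∧ (φs i).1 u = b

/-- The family `φs` with index `a i` written into `t` and class label `b` written into `u` in its
`i`-th member. -/
def tagged [DecidableEq LVar] (t u : LVar) (a : ι → LVal) (b : LVal)
    (φs : ι → EState PVar PVal LVar LVal) : ι → EState PVar PVal LVar LVal :=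
  fun i => (Function.update (Function.update (φs i).1 t (a i)) u b, (φs i).2)

variable [DecidableEq LVar] {t u : LVar}

theorem tagged_apply_index (htu : t ≠ u) (a : ι → LVal) (b : LVal)
    (φs : ι → EState PVar PVal LVar LVal) (i : ι) : (tagged t u a b φs i).1 t = a i := by
  simp [tagged, htu]

theorem tagged_apply_label (t u : LVar) (a : ι → LVal) (b : LVal)
    (φs : ι → EState PVar PVal LVar LVal) (i : ι) : (tagged t u a b φs i).1 u = b := by
  simp [tagged]

theorem isTagged_range_union_range_iff (htu : t ≠ u) {a : ι → LVal} (ha : a.Injective)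
    {a' : κ → LVal} {b b' : LVal} (hb : b ≠ b') {φs ψs : ι → EState PVar PVal LVar LVal}
    {γs : κ → EState PVar PVal LVar LVal} :
    IsTagged t u a b (Set.range (tagged t u a b φs) ∪ Set.range (tagged t u a' b' γs)) ψs ↔
      ψs = tagged t u a b φs := by
  constructor
  · intro hψs
    funext i
    obtain ⟨⟨j, hj⟩ | ⟨j, hj⟩, hindex, hlabel⟩ := hψs i
    · rw [← hj, tagged_apply_index htu] at hindex
      rw [← hj, ha hindex]
    · rw [← hj, tagged_apply_label] at hlabel
      exact absurd hlabel.symm hb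
  · rintro rfl i
    exact ⟨Or.inl ⟨i, rfl⟩, tagged_apply_index htu a b φs i, tagged_apply_label t u a b φs i⟩

theorem InsensPair.tagged_mem_iff {k1 k2 : ℕ}
    {T : Set ((Fin k1 → EState PVar PVal LVar LVal) × (Fin k2 → EState PVar PVal LVar LVal))}
    (ht : InsensPair t T) (hu : InsensPair u T) (a₁ : Fin k1 → LVal) (a₂ : Fin k2 → LVal)
    (b₁ b₂ : LVal) (φs : Fin k1 → EState PVar PVal LVar LVal)
    (γs : Fin k2 → EState PVar PVal LVar LVal) :
    (tagged t u a₁ b₁ φs, tagged t u a₂ b₂ γs) ∈ T ↔ (φs, γs) ∈ T :=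
  ((ht (φs, γs) a₁ a₂).trans (hu _ (fun _ => b₁) fun _ => b₂)).symm

end Tagging

section Execution

variable {PVar PVal LVar LVal : Type} [DecidableEq PVar] {k : ℕ} {C : Cmd PVar PVal}

theorem isTagged_sem_iff {t u : LVar} {a : Fin k → LVal} {b : LVal}
    {S : Set (EState PVar PVal LVar LVal)} {φs' : Fin k → EState PVar PVal LVar LVal} :
    IsTagged t u a b (sem C S) φs' ↔ ∃ φs, IsTagged t u a b S φs ∧ KStep C φs φs' := by
  constructor
  · intro hφs'
    choose σ hσS hstep using fun i => (hφs' i).1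
    exact ⟨fun i => ((φs' i).1, σ i), fun i => ⟨hσS i, (hφs' i).2⟩, fun i => ⟨hstep i, rfl⟩⟩
  · rintro ⟨φs, hφs, hstep⟩ i
    obtain ⟨hbig, hlogical⟩ := hstep i
    obtain ⟨hmem, htags⟩ := hφs i
    rw [← Prod.mk.eta (p := φs i), hlogical] at hmem
    rw [hlogical] at htags
    exact ⟨⟨(φs i).2, hmem, hbig⟩, htags⟩

theorem kStep_tagged_iff [DecidableEq LVar] {t u : LVar} {a : Fin k → LVal} {b : LVal}
    {φs ψs : Fin k → EState PVar PVal LVar LVal} :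
    KStep C (tagged t u a b φs) ψs ↔ ∃ φs', KStep C φs φs' ∧ tagged t u a b φs' = ψs := by
  constructor
  · intro hstep
    exact ⟨fun i => ((φs i).1, (ψs i).2), fun i => ⟨(hstep i).1, rfl⟩,
      funext fun i => Prod.ext (hstep i).2 rfl⟩
  · rintro ⟨φs', hstep, rfl⟩ i
    exact ⟨(hstep i).1, by simp only [tagged, (hstep i).2]⟩

end Execution

section Triples

variable {PVar PVal LVar LVal : Type} {k1 k2 : ℕ}

/-- The hyper-assertion `P'` encoding the precondition `P`, for arbitrary indices `a₁`, `a₂` and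
class labels `b₁`, `b₂`. Its first conjunct ensures that an existential tuple is available. -/
def UEPre (t u : LVar) (a₁ : Fin k1 → LVal) (a₂ : Fin k2 → LVal) (b₁ b₂ : LVal)
    (P : Set ((Fin k1 → EState PVar PVal LVar LVal) × (Fin k2 → EState PVar PVal LVar LVal))) :
    HAssn PVar PVal LVar LVal :=
  fun S => (∀ i, ∃ φ ∈ S, φ.1 t = a₂ i ∧ φ.1 u = b₂) ∧
    ∀ φs γs, IsTagged t u a₁ b₁ S φs → IsTagged t u a₂ b₂ S γs → (φs, γs) ∈ P

/-- The hyper-assertion `Q'` encoding the postcondition `Q`, for arbitrary indices `a₁`, `a₂` and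
class labels `b₁`, `b₂`. -/
def UEPost (t u : LVar) (a₁ : Fin k1 → LVal) (a₂ : Fin k2 → LVal) (b₁ b₂ : LVal)
    (Q : Set ((Fin k1 → EState PVar PVal LVar LVal) × (Fin k2 → EState PVar PVal LVar LVal))) :
    HAssn PVar PVal LVar LVal :=
  fun S => ∀ φs, IsTagged t u a₁ b₁ S φs → ∃ γs, IsTagged t u a₂ b₂ S γs ∧ (φs, γs) ∈ Q

variable [DecidableEq PVar] {t u : LVar} {a₁ : Fin k1 → LVal} {a₂ : Fin k2 → LVal} {b₁ b₂ : LVal}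
  {P Q : Set ((Fin k1 → EState PVar PVal LVar LVal) × (Fin k2 → EState PVar PVal LVar LVal))}
  {C : Cmd PVar PVal}

theorem UETriple.hyperTriple (h : UETriple P C Q) :
    HyperTriple (UEPre t u a₁ a₂ b₁ b₂ P) C (UEPost t u a₁ a₂ b₁ b₂ Q) := by
  rintro S ⟨hex, hP⟩ φs' hφs'
  obtain ⟨γs, hγs⟩ : ∃ γs, IsTagged t u a₂ b₂ S γs := Classical.skolem.1 hex
  obtain ⟨φs, hφs, hφstep⟩ := isTagged_sem_iff.1 hφs'
  obtain ⟨γs', hγstep, hQ⟩ := h (φs, γs) (hP φs γs hφs hγs) φs' hφstep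
  exact ⟨γs', isTagged_sem_iff.2 ⟨γs, hγs, hγstep⟩, hQ⟩

theorem UETriple.of_hyperTriple [DecidableEq LVar] (htu : t ≠ u) (ha₁ : a₁.Injective)
    (ha₂ : a₂.Injective) (hb : b₁ ≠ b₂) (hPt : InsensPair t P) (hPu : InsensPair u P)
    (hQt : InsensPair t Q) (hQu : InsensPair u Q)
    (h : HyperTriple (UEPre t u a₁ a₂ b₁ b₂ P) C (UEPost t u a₁ a₂ b₁ b₂ Q)) :
    UETriple P C Q := by
  rintro ⟨φs, γs⟩ hP φs' hφstep
  let S := Set.range (tagged t u a₁ b₁ φs) ∪ Set.range (tagged t u a₂ b₂ γs)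
  have hS₁ {ψs} : IsTagged t u a₁ b₁ S ψs ↔ ψs = tagged t u a₁ b₁ φs :=
    isTagged_range_union_range_iff htu ha₁ hb
  have hS₂ {ψs} : IsTagged t u a₂ b₂ S ψs ↔ ψs = tagged t u a₂ b₂ γs := by
    simpa only [S, Set.union_comm] using isTagged_range_union_range_iff htu ha₂ hb.symm
  have hpre : UEPre t u a₁ a₂ b₁ b₂ P S := by
    refine ⟨fun i => ⟨_, hS₂.2 rfl i⟩, fun φs₀ γs₀ hφs₀ hγs₀ => ?_⟩
    rw [hS₁.1 hφs₀, hS₂.1 hγs₀]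
    exact (hPt.tagged_mem_iff hPu a₁ a₂ b₁ b₂ φs γs).2 hP
  have hφs' : IsTagged t u a₁ b₁ (sem C S) (tagged t u a₁ b₁ φs') :=
    isTagged_sem_iff.2 ⟨_, hS₁.2 rfl, kStep_tagged_iff.2 ⟨φs', hφstep, rfl⟩⟩
  obtain ⟨ψs, hψs, hQ⟩ := h S hpre _ hφs'
  obtain ⟨γs₀, hγs₀, hψstep⟩ := isTagged_sem_iff.1 hψs
  rw [hS₂.1 hγs₀] at hψstep
  obtain ⟨γs', hγstep, rfl⟩ := kStep_tagged_iff.1 hψstep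
  exact ⟨γs', hγstep, (hQt.tagged_mem_iff hQu a₁ a₂ b₁ b₂ φs' γs').1 hQ⟩

end Triples

/-- Expressing k-Universal Existential triples in Hyper Hoare Logic. -/
theorem expressing_kUE_in_HHL {PVar PVal LVar LVal : Type}
    [DecidableEq PVar] [DecidableEq LVar]
    (k1 k2 : ℕ) (hk1 : 1 ≤ k1) (hk2 : 1 ≤ k2)
    (t u : LVar) (htu : t ≠ u)
    (num : ℕ → LVal)
    (hnum : ∀ i j : ℕ, 1 ≤ i → i ≤ max (max k1 k2) 2 → 1 ≤ j → j ≤ max (max k1 k2) 2 →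
      num i = num j → i = j)
    (P Q : Set ((Fin k1 → EState PVar PVal LVar LVal) × (Fin k2 → EState PVar PVal LVar LVal)))
    (hPt : InsensPair t P) (hPu : InsensPair u P)
    (hQt : InsensPair t Q) (hQu : InsensPair u Q)
    (C : Cmd PVar PVal) :
    UETriple P C Q ↔
      HyperTriple
        (fun S =>
          (∀ i : Fin k2, ∃ φ ∈ S, φ.1 t = num (i.1 + 1) ∧ φ.1 u = num 2) ∧
          (∀ (φs : Fin k1 → EState PVar PVal LVar LVal)
             (γs : Fin k2 → EState PVar PVal LVar LVal),
            (∀ i : Fin k1, φs i ∈ S ∧ (φs i).1 t = num (i.1 + 1) ∧ (φs i).1 u = num 1) →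
            (∀ i : Fin k2, γs i ∈ S ∧ (γs i).1 t = num (i.1 + 1) ∧ (γs i).1 u = num 2) →
            (φs, γs) ∈ P))
        C
        (fun S =>
          ∀ φs' : Fin k1 → EState PVar PVal LVar LVal,
            (∀ i : Fin k1, φs' i ∈ S ∧ (φs' i).1 t = num (i.1 + 1) ∧ (φs' i).1 u = num 1) →
            ∃ γs' : Fin k2 → EState PVar PVal LVar LVal,
              (∀ i : Fin k2, γs' i ∈ S ∧ (γs' i).1 t = num (i.1 + 1) ∧ (γs' i).1 u = num 2) ∧
              (φs', γs') ∈ Q) := by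
  have index_injective {k : ℕ} (hk : k ≤ max (max k1 k2) 2) :
      Function.Injective fun i : Fin k => num (i.1 + 1) := fun i j hij => by
    have := hnum (i + 1) (j + 1) (by lia) (by lia) (by lia) (by lia) hij
    exact Fin.ext (by lia)
  have label_ne : num 1 ≠ num 2 := fun h => by
    simpa using hnum 1 2 (by lia) (by lia) (by lia) (by lia) h
  exact ⟨UETriple.hyperTriple, UETriple.of_hyperTriple htu (index_injective (by lia))
    (index_injective (by lia)) label_ne hPt hPu hQt hQu⟩
end

section
/- Soundness of the While-∃ rule: let b be a predicate on program states, C a command, ≺ a well-founded relation on a type α, e a function from extended states to α, and P, Q families of hyper-assertions indexed by extended states. Define if(b){C} := ((assume b) ; C) + (assume(λσ. ¬ b(σ))) and while(b){C} := ((assume b) ; C)* ; assume(λσ. ¬ b(σ)). Suppose (i) for every v : α, the hyper-triple ⊨ {λS. ∃φ ∈ S, P_φ(S) ∧ b(φ^P) ∧ e(φ) = v} if(b){C} {λS. ∃φ ∈ S, P_φ(S) ∧ e(φ) ≺ v} is valid, and (ii) for every extended state φ, the hyper-triple ⊨ {P_φ} while(b){C} {Q_φ} is valid. Then the hyper-triple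 ⊨ {λS. ∃φ ∈ S, P_φ(S)} while(b){C} {λS. ∃φ ∈ S, Q_φ(S)} is valid. -/
/-- if(b){C} := ((assume b) ; C) + (assume ¬b). -/
def ifCmd {PVar PVal : Type} (b : (PVar → PVal) → Prop) (C : Cmd PVar PVal) :
    Cmd PVar PVal :=
  Cmd.choice (Cmd.seq (Cmd.assume b) C) (Cmd.assume (fun σ => ¬ b σ))

/-- while(b){C} := ((assume b) ; C)* ; assume ¬b. -/
def whileCmd {PVar PVal : Type} (b : (PVar → PVal) → Prop) (C : Cmd PVar PVal) :
    Cmd PVar PVal :=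
  Cmd.seq (Cmd.iter (Cmd.seq (Cmd.assume b) C)) (Cmd.assume (fun σ => ¬ b σ))

/-!
One guarded step followed by the loop is the loop itself, so `sem (whileCmd b C)` is unchanged by
first applying `sem (ifCmd b C)`. Follow the witness `φ` of the precondition: while its guard holds,
one such step yields a new witness whose variant `e` is strictly smaller, so by well-foundedness
some witness eventually fails the guard. That one survives the loop unchanged, and the
postcondition holds for it.
-/

section Semantics

variable {PVar PVal LVar LVal : Type} [DecidableEq PVar]
  (b : (PVar → PVal) → Prop) (C C₁ C₂ : Cmd PVar PVal) (S T : Set (EState PVar PVal LVar LVal))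

theorem sem_empty : sem C (∅ : Set (EState PVar PVal LVar LVal)) = ∅ := by
  simp [sem]

theorem sem_union : sem C (S ∪ T) = sem C S ∪ sem C T := by
  ext φ
  simp only [sem, Set.mem_union, Set.mem_ofPred_eq, or_and_right, exists_or]

theorem sem_assume_s18 : sem (Cmd.assume b) S = {φ ∈ S | b φ.2} := by
  ext ⟨l, σ⟩
  constructor
  · rintro ⟨_, hσ, hassume⟩
    cases hassume with
    | assume hb => exact ⟨hσ, hb⟩
  · rintro ⟨hσ, hb⟩
    exact ⟨σ, hσ, .assume hb⟩

theorem sem_seq_s18 : sem (Cmd.seq C₁ C₂) S = sem C₂ (sem C₁ S) := by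
  ext ⟨l, τ⟩
  constructor
  · rintro ⟨σ, hσ, hseq⟩
    cases hseq with
    | @seq _ _ _ ρ _ h₁ h₂ => exact ⟨ρ, ⟨σ, hσ, h₁⟩, h₂⟩
  · rintro ⟨ρ, ⟨σ, hσ, h₁⟩, h₂⟩
    exact ⟨σ, hσ, .seq h₁ h₂⟩

theorem sem_choice_s18 : sem (Cmd.choice C₁ C₂) S = sem C₁ S ∪ sem C₂ S := by
  ext ⟨l, τ⟩
  constructor
  · rintro ⟨σ, hσ, hchoice⟩
    cases hchoice with
    | choiceL h₁ => exact .inl ⟨σ, hσ, h₁⟩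
    | choiceR h₂ => exact .inr ⟨σ, hσ, h₂⟩
  · rintro (⟨σ, hσ, h₁⟩ | ⟨σ, hσ, h₂⟩)
    · exact ⟨σ, hσ, .choiceL h₁⟩
    · exact ⟨σ, hσ, .choiceR h₂⟩

theorem sem_iter_s18 : sem (Cmd.iter C) S = sem (Cmd.iter C) (sem C S) ∪ S := by
  ext ⟨l, τ⟩
  constructor
  · rintro ⟨σ, hσ, hruns⟩
    cases hruns with
    | iterNil => exact .inr hσ
    | @iterCons _ _ ρ _ hstep hiter => exact .inl ⟨ρ, ⟨σ, hσ, hstep⟩, hiter⟩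
  · rintro (⟨ρ, ⟨σ, hσ, hstep⟩, hiter⟩ | hτ)
    · exact ⟨σ, hσ, .iterCons hstep hiter⟩
    · exact ⟨τ, hτ, .iterNil⟩

theorem sem_ifCmd : sem (ifCmd b C) S = sem C {φ ∈ S | b φ.2} ∪ {φ ∈ S | ¬ b φ.2} := by
  simp only [ifCmd, sem_choice_s18, sem_seq_s18, sem_assume_s18]

theorem sem_whileCmd :
    sem (whileCmd b C) S = sem (whileCmd b C) (sem C {φ ∈ S | b φ.2}) ∪ {φ ∈ S | ¬ b φ.2} := by
  simp only [whileCmd, sem_seq_s18]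
  rw [sem_iter_s18, sem_union, sem_seq_s18, sem_assume_s18 b, sem_assume_s18 _ S]

theorem sem_whileCmd_sep_not :
    sem (whileCmd b C) {φ ∈ S | ¬ b φ.2} = {φ ∈ S | ¬ b φ.2} := by
  have no_guard : {φ ∈ {φ ∈ S | ¬ b φ.2} | b φ.2} = ∅ :=
    Set.sep_eq_empty_iff_mem_false.2 fun _ hφ => hφ.2
  have all_exit : {φ ∈ {φ ∈ S | ¬ b φ.2} | ¬ b φ.2} = {φ ∈ S | ¬ b φ.2} :=
    Set.sep_eq_self_iff_mem_true.2 fun _ hφ => hφ.2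
  rw [sem_whileCmd, no_guard, all_exit, sem_empty, sem_empty, Set.empty_union]

theorem sem_whileCmd_sem_ifCmd :
    sem (whileCmd b C) (sem (ifCmd b C) S) = sem (whileCmd b C) S := by
  rw [sem_ifCmd, sem_union, sem_whileCmd_sep_not, ← sem_whileCmd]

variable {b S} in
theorem mem_sem_whileCmd_of_not {φ : EState PVar PVal LVar LVal} (hφ : φ ∈ S) (hb : ¬ b φ.2) :
    φ ∈ sem (whileCmd b C) S := by
  rw [sem_whileCmd]
  exact .inr ⟨hφ, hb⟩

end Semantics

/-- Soundness of the While-∃ rule. -/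
theorem while_exists_sound {PVar PVal LVar LVal : Type} [DecidableEq PVar]
    {α : Type} (lt : α → α → Prop) (hwf : WellFounded lt)
    (b : (PVar → PVal) → Prop) (C : Cmd PVar PVal)
    (e : EState PVar PVal LVar LVal → α)
    (P Q : EState PVar PVal LVar LVal → HAssn PVar PVal LVar LVal)
    (hvariant : ∀ v : α,
      HyperTriple
        (fun S => ∃ φ ∈ S, P φ S ∧ b φ.2 ∧ e φ = v)
        (ifCmd b C)
        (fun S => ∃ φ ∈ S, P φ S ∧ lt (e φ) v))
    (hrest : ∀ φ : EState PVar PVal LVar LVal,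
      HyperTriple (P φ) (whileCmd b C) (Q φ)) :
    HyperTriple
      (fun S => ∃ φ ∈ S, P φ S)
      (whileCmd b C)
      (fun S => ∃ φ ∈ S, Q φ S) := by
  rintro S ⟨φ, hφ, hP⟩
  induction φ using (InvImage.wf e hwf).induction generalizing S with
  | _ φ ih =>
    by_cases hb : b φ.2
    · obtain ⟨ψ, hψ, hPψ, hlt⟩ := hvariant (e φ) S ⟨φ, hφ, hP, hb, rfl⟩
      rw [← sem_whileCmd_sem_ifCmd]
      exact ih ψ hlt (sem (ifCmd b C) S) hψ hPψ
    · exact ⟨φ, mem_sem_whileCmd_of_not C hφ hb, hrest φ S hP⟩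
end
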